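/- arXiv:2308.05066 — 2 statements merged into one kernel-verified Lean document; each statement's English description precedes it below -/
import Mathlib

section
/- Let k be a field of characteristic 0 and B a normal affine k-domain graded over k by a finitely generated abelian group G. If B is saturated in codimension 1, then 𝒳(B) = ∅ or 𝒳(B) = 𝕋(B). -/
noncomputable section

/-- A derivation is locally nilpotent. -/
def IsLND {R : Type*} [CommRing R] (D : Derivation ℤ R R) : Prop :=
  ∀ b : R, ∃ n : ℕ, 0 < n ∧ (⇑D)^[n] b = 0

/-- Kernel of a derivation, as a subring. -/
def kerDer {R : Type*} [CommRing R] (D : Derivation ℤ R R) : Subring R where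
  carrier := {x | D x = 0}
  one_mem' := by simp
  mul_mem' := by
    intro a b ha hb
    simp only [Set.mem_setOf_eq] at *
    rw [Derivation.leibniz, ha, hb]
    simp
  add_mem' := by
    intro a b ha hb
    simp only [Set.mem_setOf_eq] at *
    rw [map_add, ha, hb, add_zero]
  zero_mem' := by simp
  neg_mem' := by
    intro a ha
    simp only [Set.mem_setOf_eq] at *
    rw [map_neg, ha, neg_zero]

section Graded

variable {G : Type*} [AddCommGroup G] {B : Type*} [CommRing B]

/-- The Veronese subring `B^{(H)} = ⊕_{i ∈ H} B_i` of a `G`-graded ring,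
realized as the subring generated by the homogeneous elements whose degree lies in `H`. -/
def verSub (𝒜 : G → AddSubgroup B) (H : AddSubgroup G) : Subring B :=
  Subring.closure (⋃ i ∈ (H : Set G), (𝒜 i : Set B))

/-- 𝔾(B): the subgroup of G generated by the degrees of nonzero homogeneous elements. -/
def Gsub (𝒜 : G → AddSubgroup B) : AddSubgroup G :=
  AddSubgroup.closure { i : G | 𝒜 i ≠ ⊥ }

/-- `H ∈ 𝕋(B)`: the quotient `𝔾(B)/(H ∩ 𝔾(B))` is torsion. -/
def Tmem (𝒜 : G → AddSubgroup B) (H : AddSubgroup G) : Prop :=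
  ∀ g ∈ Gsub 𝒜, ∃ n : ℕ, 0 < n ∧ n • g ∈ H

/-- A homogeneous derivation of `B`. -/
def IsHomogDer (𝒜 : G → AddSubgroup B) (D : Derivation ℤ B B) : Prop :=
  ∃ d : G, ∀ (i : G) (x : B), x ∈ 𝒜 i → D x ∈ 𝒜 (i + d)

/-- A homogeneous derivation of a graded subring `S` of `B`. -/
def IsHomogDerOn (𝒜 : G → AddSubgroup B) (S : Subring B) (D : Derivation ℤ S S) : Prop :=
  ∃ d : G, ∀ (i : G) (x : S), (x : B) ∈ 𝒜 i → ((D x : S) : B) ∈ 𝒜 (i + d)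

/-- 𝕄̄(B,p): the subgroup of G generated by the degrees i with B_i ⊄ p. -/
def Mbar (𝒜 : G → AddSubgroup B) (p : Ideal B) : AddSubgroup G :=
  AddSubgroup.closure { i : G | ¬ (𝒜 i : Set B) ⊆ (p : Set B) }

/-- A prime ideal of height 1. -/
def heightOne {R : Type*} [CommRing R] (p : Ideal R) : Prop :=
  p.IsPrime ∧ (∃ q : Ideal R, q.IsPrime ∧ q < p) ∧
    ∀ q r : Ideal R, q.IsPrime → r.IsPrime → q < r → r < p → False

open Classical in
/-- 𝔾̄(B). -/
def Gbar (𝒜 : G → AddSubgroup B) : AddSubgroup G :=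
  if ∃ p : Ideal B, heightOne p then ⨅ p : {p : Ideal B // heightOne p}, Mbar 𝒜 p.1
  else Gsub 𝒜

end Graded

/-- 𝒳(B): the set of H ∈ 𝕋(B) with HLND(B^{(H)}) ≠ {0}. -/
def Xset {G : Type*} [AddCommGroup G] {B : Type*} [CommRing B]
    (𝒜 : G → AddSubgroup B) : Set (AddSubgroup G) :=
  { H | Tmem 𝒜 H ∧ ∃ D : Derivation ℤ (verSub 𝒜 H) (verSub 𝒜 H),
      IsLND D ∧ IsHomogDerOn 𝒜 (verSub 𝒜 H) D ∧ D ≠ 0 }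

/-! ### Degree with respect to a derivation -/

/-- `x` has degree `n` with respect to `D`. -/
def HasDeg {R : Type*} [CommRing R] (D : Derivation ℤ R R) (x : R) (n : ℕ) : Prop :=
  D^[n] x ≠ 0 ∧ D^[n + 1] x = 0

section deg
variable {R : Type*} [CommRing R] (D : Derivation ℤ R R)

lemma der_iter_zero (n : ℕ) : D^[n] (0 : R) = 0 := by
  induction n with
  | zero => rfl
  | succ n ih => rw [Function.iterate_succ_apply, map_zero, ih]

lemma der_iter_add (n : ℕ) (x y : R) : D^[n] (x + y) = D^[n] x + D^[n] y := by
  induction n generalizing x y with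
  | zero => rfl
  | succ n ih => rw [Function.iterate_succ_apply, map_add, ih]; rfl

lemma der_iter_vanish {x : R} {m n : ℕ} (h : D^[m] x = 0) (hmn : m ≤ n) : D^[n] x = 0 := by
  obtain ⟨c, rfl⟩ := Nat.exists_eq_add_of_le hmn
  rw [add_comm, Function.iterate_add_apply, h, der_iter_zero]

/-- If `D^(m+1) x = 0` and `D^(n+1) y = 0`, then the top term of the product. -/
lemma der_iter_mul (m n : ℕ) : ∀ x y : R, D^[m + 1] x = 0 → D^[n + 1] y = 0 →
    D^[m + n] (x * y) = ((m + n).choose m : R) * (D^[m] x * D^[n] y) := by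
  induction hN : m + n generalizing m n with
  | zero =>
    intro x y _ _
    obtain ⟨rfl, rfl⟩ : m = 0 ∧ n = 0 := by omega
    simp
  | succ N ih =>
    intro x y hx hy
    rw [Function.iterate_succ_apply, Derivation.leibniz, der_iter_add, smul_eq_mul, smul_eq_mul]
    rcases Nat.eq_zero_or_pos m with rfl | hm
    · have h0 : D x = 0 := hx
      obtain rfl : n = N + 1 := by omega
      have := ih 0 N (by omega) x (D y) hx (by rwa [← Function.iterate_succ_apply])
      rw [this, h0, mul_zero, der_iter_zero]
      simp [Function.iterate_succ_apply]
    · obtain ⟨m, rfl⟩ : ∃ m', m = m' + 1 := ⟨m - 1, by omega⟩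
      have e2 := ih m n (by omega) (D x) y (by rwa [← Function.iterate_succ_apply]) hy
      rw [mul_comm (D x) y] at e2
      rcases Nat.eq_zero_or_pos n with rfl | hn
      · have h0 : D y = 0 := hy
        obtain rfl : m = N := by omega
        rw [e2, h0, mul_zero, der_iter_zero]
        simp [Function.iterate_succ_apply]
      · obtain ⟨n, rfl⟩ : ∃ n', n = n' + 1 := ⟨n - 1, by omega⟩
        have e1 := ih (m + 1) n (by omega) x (D y) hx (by rwa [← Function.iterate_succ_apply])
        rw [e1, e2, Nat.choose_succ_succ]
        simp only [Function.iterate_succ_apply]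
        push_cast
        ring

lemma HasDeg.unique {x : R} {m n : ℕ} (h : HasDeg D x m) (h' : HasDeg D x n) : m = n := by
  rcases lt_trichotomy m n with hl | hl | hl
  · exact absurd (der_iter_vanish D h.2 hl) h'.1
  · exact hl
  · exact absurd (der_iter_vanish D h'.2 hl) h.1

lemma HasDeg.exists_of {x : R} (hx : x ≠ 0) {n : ℕ} (h : D^[n] x = 0) : ∃ m, HasDeg D x m := by
  induction n with
  | zero => exact absurd h hx
  | succ n ih =>
    by_cases h' : D^[n] x = 0
    · exact ih h'
    · exact ⟨n, h', h⟩

lemma HasDeg.der {x : R} {n : ℕ} (h : HasDeg D x (n + 1)) : HasDeg D (D x) n := h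

variable [IsDomain R] [CharZero R]

lemma HasDeg.mul {x y : R} {m n : ℕ} (h : HasDeg D x m) (h' : HasDeg D y n) :
    HasDeg D (x * y) (m + n) := by
  have e := der_iter_mul D m n x y h.2 h'.2
  constructor
  · rw [e]
    refine mul_ne_zero ?_ (mul_ne_zero h.1 h'.1)
    exact_mod_cast (Nat.choose_pos (by omega)).ne'
  · have e2 := der_iter_mul D (m + 1) n x y (der_iter_vanish D h.2 (by omega)) h'.2
    rw [show m + n + 1 = m + 1 + n by ring, e2, h.2]
    simp

lemma HasDeg.pow {x : R} {m : ℕ} (h : HasDeg D x m) (n : ℕ) : HasDeg D (x ^ n) (n * m) := by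
  induction n with
  | zero => exact ⟨by simp, by simp⟩
  | succ n ih =>
    rw [pow_succ, add_mul, one_mul]
    exact ih.mul D h

end deg

/-! ### Height one primes -/

lemma heightOne_of_minimal {B : Type*} [CommRing B] [IsDomain B] [IsNoetherianRing B]
    {t : B} {p : Ideal B} (hp : p ∈ (Ideal.span {t}).minimalPrimes) (hp0 : p ≠ ⊥) :
    heightOne p := by
  have hpp : p.IsPrime := hp.1.1
  refine ⟨hpp, ⟨⊥, Ideal.isPrime_bot, bot_lt_iff_ne_bot.2 hp0⟩, ?_⟩
  intro q r hq hr hqr hrp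
  have h1 := Ideal.height_le_one_of_isPrincipal_of_mem_minimalPrimes (Ideal.span {t}) p hp
  have h2 := Ideal.height_add_one_le_of_lt_of_isPrime hrp
  have h3 := Ideal.height_add_one_le_of_lt_of_isPrime hqr
  have : (2 : ℕ∞) ≤ 1 := by
    calc (2 : ℕ∞) ≤ q.height + 1 + 1 := by
          rw [add_assoc, one_add_one_eq_two]; exact le_add_self
      _ ≤ r.height + 1 := by gcongr
      _ ≤ 1 := h2.trans h1
  exact absurd this (by norm_num)

/-- In a noetherian normal domain, a fraction `z` lies in `B` as soon as for each height one
prime it can be multiplied into `B` by an element outside of the prime. -/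
lemma mem_of_heightOne {B : Type*} [CommRing B] [IsDomain B] [IsNoetherianRing B]
    [IsIntegrallyClosed B] (K : Type*) [Field K] [Algebra B K] [IsFractionRing B K] (z : K)
    (h : ∀ p : Ideal B, heightOne p → ∃ e : B, e ∉ p ∧ ∃ y : B, algebraMap B K y = e • z) :
    ∃ y : B, algebraMap B K y = z := by
  by_contra hz
  let N : Submodule B K := LinearMap.range (Algebra.linearMap B K)
  have hN : ∀ w : K, w ∈ N ↔ ∃ y : B, algebraMap B K y = w := fun w => by
    simp [N, LinearMap.mem_range]
  have hne : N.mkQ z ≠ 0 := by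
    rw [Submodule.mkQ_apply, Ne, Submodule.Quotient.mk_eq_zero, hN]; exact hz
  obtain ⟨p, hp, hle⟩ := exists_le_isAssociatedPrime_of_isNoetherianRing B (N.mkQ z) hne
  obtain ⟨hpp, x, hx⟩ := isAssociatedPrime_iff.1 hp
  obtain ⟨w, rfl⟩ := N.mkQ_surjective x
  have hmem : ∀ y : B, y ∈ p ↔ ∃ c : B, algebraMap B K c = y • w := by
    intro y
    rw [hx, Submodule.mem_colon_singleton, Submodule.mem_bot, ← map_smul, Submodule.mkQ_apply,
      Submodule.Quotient.mk_eq_zero, hN]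
  have hp0 : p ≠ ⊥ := by
    obtain ⟨a, b, hb, rfl⟩ := IsFractionRing.div_surjective (A := B) w
    have hb0 := nonZeroDivisors.ne_zero hb
    have hb1 : algebraMap B K b ≠ 0 := by simpa using hb0
    intro h0
    apply hb0
    have : b ∈ p := by
      rw [hmem]
      refine ⟨a, ?_⟩
      rw [Algebra.smul_def, mul_div_cancel₀ _ hb1]
    rw [h0] at this
    simpa using this
  have hp1 : heightOne p := by
    by_cases hcase : ∀ t ∈ p, ∀ c : B, algebraMap B K c = t • w → c ∈ p
    · exfalso
      have hintg : IsIntegral B w := by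
        refine isIntegral_of_smul_mem_submodule (M := K) (Submodule.map (Algebra.linearMap B K) p) ?_ ?_ w ?_
        · intro h0
          apply hp0
          rw [eq_bot_iff]
          intro t ht
          have : algebraMap B K t ∈ Submodule.map (Algebra.linearMap B K) p := ⟨t, ht, rfl⟩
          rw [h0] at this
          simpa using this
        · exact Submodule.FG.map _ (IsNoetherian.noetherian p)
        · rintro _ ⟨t, ht, rfl⟩
          obtain ⟨c, hc⟩ := (hmem t).1 ht
          refine ⟨c, hcase t ht c hc, ?_⟩
          rw [Algebra.linearMap_apply, hc, Algebra.linearMap_apply, Algebra.smul_def, smul_eq_mul,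
            mul_comm]
      obtain ⟨c, hc⟩ := IsIntegrallyClosed.isIntegral_iff.1 hintg
      apply hpp.ne_top
      rw [Ideal.eq_top_iff_one, hmem]
      exact ⟨c, by rw [hc, one_smul]⟩
    · push Not at hcase
      obtain ⟨t, ht, c, hc, hcp⟩ := hcase
      refine heightOne_of_minimal (t := t) ⟨⟨hpp, ?_⟩, ?_⟩ hp0
      · rwa [Ideal.span_singleton_le_iff_mem]
      · rintro r ⟨hr, htr⟩ hrp y hy
        rw [Ideal.span_singleton_le_iff_mem] at htr
        obtain ⟨c', hc'⟩ := (hmem y).1 hy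
        have hyc : y * c = t * c' := by
          apply IsFractionRing.injective B K
          rw [map_mul, map_mul, hc, hc', Algebra.smul_def, Algebra.smul_def]
          ring
        have : y * c ∈ r := by rw [hyc]; exact r.mul_mem_right _ htr
        exact (hr.mem_or_mem this).resolve_right fun h => hcp (hrp h)
  obtain ⟨e, he, y, hy⟩ := h p hp1
  apply he
  apply hle
  rw [Submodule.mem_colon_singleton, Submodule.mem_bot, ← map_smul, Submodule.mkQ_apply,
      Submodule.Quotient.mk_eq_zero, hN]
  exact ⟨y, hy⟩

/-! ### Extension of derivations -/

lemma exists_ext_der (R K : Type*) [CommRing R] [IsDomain R] [Field K] [CharZero K] [Algebra R K]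
    [FaithfulSMul R K] [Algebra.IsAlgebraic R K] (D : Derivation ℤ R R) :
    ∃ E : Derivation ℤ K K, ∀ r : R, E (algebraMap R K r) = algebraMap R K (D r) := by
  let : Algebra (FractionRing R) K := FractionRing.liftAlgebra R K
  have : IsScalarTower R (FractionRing R) K := FractionRing.isScalarTower_liftAlgebra R K
  have : Algebra.IsAlgebraic (FractionRing R) K :=
    (IsFractionRing.comap_isAlgebraic_iff (A := R) (K := FractionRing R) (C := K)).1 inferInstance
  have : CharZero (FractionRing R) :=
    (RingHom.charZero_iff (algebraMap (FractionRing R) K).injective).2 inferInstance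
  have : Algebra.FormallyEtale (FractionRing R) K := Algebra.FormallyEtale.of_isSeparable _ _
  have : Algebra.FormallyEtale R (FractionRing R) :=
    Algebra.FormallyEtale.of_isLocalization (nonZeroDivisors R)
  have : Algebra.FormallyEtale R K := Algebra.FormallyEtale.comp R (FractionRing R) K
  let f : TensorProduct R K (KaehlerDifferential ℤ R) →ₗ[K] K :=
    TensorProduct.AlgebraTensorModule.lift
      (LinearMap.toSpanSingleton K _ ((Algebra.linearMap R K).comp D.liftKaehlerDifferential))
  let g := f.comp (KaehlerDifferential.tensorKaehlerEquivOfFormallyEtale ℤ R K).symm.toLinearMap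
  refine ⟨g.compDer (KaehlerDifferential.D ℤ K), fun r => ?_⟩
  simp [g, f, KaehlerDifferential.tensorKaehlerEquivOfFormallyEtale_symm_D_algebraMap]

/-! ### Combinatorics of degrees -/

lemma exists_add_mem {G : Type*} [AddCommGroup G] (M : AddSubmonoid G) (H : AddSubgroup G)
    (hM : ∀ m ∈ M, ∃ n : ℕ, 0 < n ∧ n • m ∈ H) {g : G}
    (hg : g ∈ AddSubgroup.closure (M : Set G)) : ∃ m ∈ M, m + g ∈ H := by
  suffices h : ∀ g ∈ AddSubgroup.closure (M : Set G), ∃ m ∈ M, m - g ∈ H by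
    simpa using h (-g) (neg_mem hg)
  intro g hg
  induction hg using AddSubgroup.closure_induction with
  | mem x hx => exact ⟨x, hx, by simp⟩
  | zero => exact ⟨0, zero_mem _, by simp⟩
  | add x y _ _ hx hy =>
    obtain ⟨m, hm, hmx⟩ := hx
    obtain ⟨n, hn, hny⟩ := hy
    refine ⟨m + n, add_mem hm hn, ?_⟩
    rw [add_sub_add_comm]; exact add_mem hmx hny
  | neg x _ hx =>
    obtain ⟨m, hm, hmx⟩ := hx
    obtain ⟨n, hn, hnm⟩ := hM m hm
    refine ⟨(n - 1) • m, nsmul_mem hm _, ?_⟩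
    have := sub_mem hnm hmx
    obtain ⟨n, rfl⟩ : ∃ n', n = n' + 1 := ⟨n - 1, by omega⟩
    rw [succ_nsmul] at this
    convert this using 1
    simp; abel

set_option linter.unusedSectionVars false

/-! ### Graded preliminaries -/

section gr
variable {G : Type*} [AddCommGroup G] [DecidableEq G] {B : Type*} [CommRing B] [IsDomain B]
  (𝒜 : G → AddSubgroup B)

lemma mem_Gsub {i : G} {x : B} (hx : x ∈ 𝒜 i) (hx0 : x ≠ 0) : i ∈ Gsub 𝒜 := by
  apply AddSubgroup.subset_closure
  intro h
  rw [h] at hx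
  exact hx0 (by simpa using hx)

lemma mem_verSub {H : AddSubgroup G} {i : G} (hi : i ∈ H) {x : B} (hx : x ∈ 𝒜 i) :
    x ∈ verSub 𝒜 H :=
  Subring.subset_closure (Set.mem_biUnion (x := i) hi hx)

lemma le_Mbar (hsat : Gbar 𝒜 = Gsub 𝒜) {p : Ideal B} (hp : heightOne p) :
    Gsub 𝒜 ≤ Mbar 𝒜 p := by
  rw [← hsat, Gbar, if_pos ⟨p, hp⟩]
  exact iInf_le (fun p : {p : Ideal B // heightOne p} => Mbar 𝒜 p.1) ⟨p, hp⟩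

variable [GradedRing 𝒜]

lemma homog_cancel {i j : G} {x y : B} (hx : x ∈ 𝒜 i) (hx0 : x ≠ 0) (hxy : x * y ∈ 𝒜 (i + j)) :
    y ∈ 𝒜 j := by
  have h1 := DirectSum.coe_decompose_mul_add_of_left_mem 𝒜 (j := j) (b := y) hx
  rw [DirectSum.decompose_of_mem_same 𝒜 hxy] at h1
  rw [mul_left_cancel₀ hx0 h1]
  exact SetLike.coe_mem _

lemma homog_pow {i : G} {x : B} (hx : x ∈ 𝒜 i) (n : ℕ) : x ^ n ∈ 𝒜 (n • i) :=
  SetLike.pow_mem_graded n hx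

/-- The submonoid of degrees `i` with `B_i ⊄ p`. -/
def MMon (p : Ideal B) [hp : p.IsPrime] : AddSubmonoid G where
  carrier := { i : G | ¬ (𝒜 i : Set B) ⊆ (p : Set B) }
  zero_mem' := fun h => hp.ne_top ((Ideal.eq_top_iff_one p).2 (h (SetLike.GradedOne.one_mem)))
  add_mem' := by
    intro i j hi hj
    obtain ⟨x, hx, hxp⟩ := Set.not_subset.1 hi
    obtain ⟨y, hy, hyp⟩ := Set.not_subset.1 hj
    refine Set.not_subset.2 ⟨x * y, SetLike.GradedMul.mul_mem hx hy, fun h => ?_⟩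
    exact (hp.mem_or_mem h).elim hxp hyp

/-- The submonoid of degrees of nonzero elements of the kernel of `D`. -/
def KMon (D : Derivation ℤ B B) : AddSubmonoid G where
  carrier := { i : G | ∃ x ∈ 𝒜 i, x ≠ 0 ∧ D x = 0 }
  zero_mem' := ⟨1, SetLike.GradedOne.one_mem, one_ne_zero, by simp⟩
  add_mem' := by
    rintro i j ⟨x, hx, hx0, hxD⟩ ⟨y, hy, hy0, hyD⟩
    exact ⟨x * y, SetLike.GradedMul.mul_mem hx hy, mul_ne_zero hx0 hy0, by simp [hxD, hyD]⟩

lemma der_eq_zero_of_homog (D : Derivation ℤ B B) (h : ∀ i, ∀ x ∈ 𝒜 i, D x = 0) : D = 0 := by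
  ext x
  induction x using DirectSum.Decomposition.inductionOn 𝒜 with
  | zero => simp
  | homogeneous m => exact h _ _ m.2
  | add m m' h h' => simpa using by rw [h, h']; simp

/-! ### From `B` to `B^{(H)}` -/

lemma homog_iter {D : Derivation ℤ B B} {d : G}
    (hd : ∀ (i : G) (x : B), x ∈ 𝒜 i → D x ∈ 𝒜 (i + d)) {i : G} {x : B} (hx : x ∈ 𝒜 i) (n : ℕ) :
    ∃ j, D^[n] x ∈ 𝒜 j := by
  induction n with
  | zero => exact ⟨i, hx⟩
  | succ n ih =>
    obtain ⟨j, hj⟩ := ih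
    exact ⟨j + d, by rw [Function.iterate_succ_apply']; exact hd _ _ hj⟩

lemma der_iter_slice (D : Derivation ℤ B B) {s a : B} (hs : D s = a) (ha : D a = 0) (m : ℕ)
    (c : B) : D^[m + 1] (s * c) = s * D^[m + 1] c + (m + 1 : ℕ) * (a * D^[m] c) := by
  induction m generalizing c with
  | zero => simp [hs]; ring
  | succ m ih =>
    rw [Function.iterate_succ_apply', ih]
    simp only [map_add, Derivation.leibniz, smul_eq_mul, hs, ha, Derivation.map_natCast,
      Function.iterate_succ_apply']
    push_cast
    ring

lemma degree_mem_KMon [CharZero B] {D : Derivation ℤ B B} {d : G}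
    (hd : ∀ (i : G) (x : B), x ∈ 𝒜 i → D x ∈ 𝒜 (i + d)) {s a : B} {j : G} (hsj : s ∈ 𝒜 j)
    (hs : D s = a) (ha : D a = 0) (ha0 : a ≠ 0) (p : Ideal B) [hp : p.IsPrime] (hsp : s ∈ p)
    (hpA : ∀ x ∈ p, D x = 0 → x = 0) (m : ℕ) :
    ∀ (i : G) (b : B), b ∈ 𝒜 i → b ∉ p → D^[m + 1] b = 0 →
      i ∈ AddSubgroup.closure (KMon 𝒜 D : Set G) := by
  induction m with
  | zero =>
    intro i b hb hbp hD
    apply AddSubgroup.subset_closure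
    exact ⟨b, hb, fun h => hbp (h ▸ p.zero_mem), hD⟩
  | succ m ih =>
    intro i b hb hbp hD
    have haj : a ∈ 𝒜 (j + d) := hs ▸ hd _ _ hsj
    have hak : j + d ∈ AddSubgroup.closure (KMon 𝒜 D : Set G) :=
      AddSubgroup.subset_closure ⟨a, haj, ha0, ha⟩
    have key := ih (j + d + i) ((m + 1) • (a * b) - s * D b) ?_ ?_ ?_
    · simpa using sub_mem key hak
    · refine sub_mem (nsmul_mem (SetLike.GradedMul.mul_mem haj hb) _) ?_
      have := SetLike.GradedMul.mul_mem hsj (hd _ _ hb)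
      rwa [show j + (i + d) = j + d + i by abel] at this
    · intro h
      have h2 := p.add_mem h (p.mul_mem_right (D b) hsp)
      rw [sub_add_cancel, nsmul_eq_mul] at h2
      rcases hp.mem_or_mem h2 with h3 | h3
      · exact Nat.cast_ne_zero.2 (Nat.succ_ne_zero m) (hpA _ h3 (Derivation.map_natCast D _))
      · rcases hp.mem_or_mem h3 with h4 | h4
        · exact ha0 (hpA _ h4 ha)
        · exact hbp h4
    · have e1 : ∀ n, D^[n] ((m + 1) • (a * b)) = (m + 1) • (a * D^[n] b) := by
        intro n
        induction n with
        | zero => rfl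
        | succ n ihn =>
          rw [Function.iterate_succ_apply', ihn, map_nsmul, Derivation.leibniz, ha, smul_zero,
            add_zero, Function.iterate_succ_apply', smul_eq_mul]
      have e2 := der_iter_slice D hs ha m (D b)
      rw [← Function.iterate_succ_apply, hD, ← Function.iterate_succ_apply] at e2
      have e3 := der_iter_add D (m + 1) ((m + 1) • (a * b) - s * D b) (s * D b)
      rw [sub_add_cancel, e1, e2, nsmul_eq_mul, mul_zero, zero_add] at e3
      simpa using e3

/-- Restriction of a derivation to a subring. -/
def restrictDer (S : Subring B) (D : Derivation ℤ B B) (h : ∀ x ∈ S, D x ∈ S) :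
    Derivation ℤ S S :=
  Derivation.mk' (AddMonoidHom.toIntLinearMap
    { toFun := fun x => ⟨D x, h _ x.2⟩
      map_zero' := by ext; simp
      map_add' := by intro x y; ext; simp }) (by intro x y; ext; simp)

lemma stepB [CharZero B] [IsNoetherianRing B] (hsat : Gbar 𝒜 = Gsub 𝒜) (D : Derivation ℤ B B)
    (hD : IsLND D) (hDh : IsHomogDer 𝒜 D) (hD0 : D ≠ 0) (H : AddSubgroup G) (hH : Tmem 𝒜 H) :
    H ∈ Xset 𝒜 := by
  refine ⟨hH, ?_⟩
  obtain ⟨d, hd⟩ := hDh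
  -- a homogeneous element not killed by `D`
  obtain ⟨i, x, hx, hDx⟩ : ∃ i, ∃ x ∈ 𝒜 i, D x ≠ 0 := by
    by_contra hcon
    push Not at hcon
    exact hD0 (der_eq_zero_of_homog 𝒜 D hcon)
  obtain ⟨j, s, hsj, ha0, ha⟩ : ∃ j, ∃ s ∈ 𝒜 j, D s ≠ 0 ∧ D (D s) = 0 := by
    obtain ⟨n, _, hn⟩ := hD (D x)
    obtain ⟨m, hm1, hm2⟩ := HasDeg.exists_of D hDx hn
    obtain ⟨j, hj⟩ := homog_iter 𝒜 hd hx m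
    refine ⟨j, _, hj, ?_, ?_⟩
    · have h1 : D (D^[m] x) = D^[m] (D x) :=
        (Function.iterate_succ_apply' D m x).symm.trans (Function.iterate_succ_apply D m x)
      rwa [h1]
    · have h1 : D (D^[m] x) = D^[m] (D x) :=
        (Function.iterate_succ_apply' D m x).symm.trans (Function.iterate_succ_apply D m x)
      rw [h1]
      exact (Function.iterate_succ_apply' D m (D x)).symm.trans hm2
  have hs0 : s ≠ 0 := fun h => ha0 (by simp [h])
  -- the prime ideal
  let A : Submonoid B :=
    { carrier := {x | D x = 0 ∧ x ≠ 0}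
      one_mem' := ⟨by simp, one_ne_zero⟩
      mul_mem' := by
        rintro a b ⟨ha, ha0⟩ ⟨hb, hb0⟩
        exact ⟨by simp [ha, hb], mul_ne_zero ha0 hb0⟩ }
  have hdisj : Disjoint ((Ideal.span {s} : Ideal B) : Set B) (A : Set B) := by
    rw [Set.disjoint_left]
    rintro y hy ⟨hy1, hy2⟩
    obtain ⟨c, rfl⟩ := Ideal.mem_span_singleton'.1 hy
    have hc0 : c ≠ 0 := left_ne_zero_of_mul hy2
    obtain ⟨n, _, hn⟩ := hD c
    obtain ⟨m, hm⟩ := HasDeg.exists_of D hc0 hn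
    have hs1 : HasDeg D s 1 := ⟨ha0, ha⟩
    have h0 : HasDeg D (c * s) 0 := ⟨hy2, hy1⟩
    have := HasDeg.unique D h0 (hm.mul D hs1)
    omega
  obtain ⟨P, hP, hsP, hPA⟩ := Ideal.exists_le_prime_disjoint _ _ hdisj
  obtain ⟨p, hpmin, hpP⟩ := Ideal.exists_minimalPrimes_le hsP
  have hpp : p.IsPrime := hpmin.1.1
  have hsp : s ∈ p := hpmin.1.2 (Ideal.mem_span_singleton_self s)
  have hp1 : heightOne p := heightOne_of_minimal hpmin (by
    rintro rfl
    exact hs0 (by simpa using hsp))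
  have hpA : ∀ x ∈ p, D x = 0 → x = 0 := by
    intro x hxp hx
    by_contra hx0
    exact Set.disjoint_left.1 hPA (hpP hxp) ⟨hx, hx0⟩
  have hle : Gsub 𝒜 ≤ AddSubgroup.closure (KMon 𝒜 D : Set G) := by
    refine (le_Mbar 𝒜 hsat hp1).trans ?_
    rw [Mbar, AddSubgroup.closure_le]
    intro i hi
    obtain ⟨b, hb, hbp⟩ := Set.not_subset.1 hi
    obtain ⟨n, _, hn⟩ := hD b
    exact degree_mem_KMon 𝒜 hd hsj rfl ha ha0 p hsp hpA n i b hb hbp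
      (der_iter_vanish D hn (Nat.le_succ n))
  have hdG : d ∈ Gsub 𝒜 := by
    have := sub_mem (mem_Gsub 𝒜 (hd _ _ hsj) ha0) (mem_Gsub 𝒜 hsj hs0)
    simpa using this
  obtain ⟨m, ⟨a, ham, ha0', haD⟩, hmd⟩ := exists_add_mem (KMon 𝒜 D) H (by
    rintro m ⟨a, ha, ha0, -⟩
    exact hH _ (mem_Gsub 𝒜 ha ha0)) (hle hdG)
  have hmaps : ∀ x ∈ verSub 𝒜 H, (a • D) x ∈ verSub 𝒜 H := by
    intro x hx
    induction hx using Subring.closure_induction with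
    | mem x hx =>
      obtain ⟨h, hh, hxh⟩ := Set.mem_iUnion₂.1 hx
      refine mem_verSub 𝒜 (i := m + (h + d)) ?_ (SetLike.GradedMul.mul_mem ham (hd _ _ hxh))
      rw [show m + (h + d) = h + (m + d) by abel]
      exact add_mem hh hmd
    | zero => rw [map_zero]; exact zero_mem _
    | one => rw [Derivation.map_one_eq_zero]; exact zero_mem _
    | add x y _ _ hx hy => rw [map_add]; exact add_mem hx hy
    | neg x _ hx => rw [map_neg]; exact neg_mem hx
    | mul x y hx' hy' hx hy =>
      rw [Derivation.leibniz]
      exact add_mem (mul_mem hx' hy) (mul_mem hy' hx)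
  have hE : ∀ x : verSub 𝒜 H, (restrictDer (verSub 𝒜 H) (a • D) hmaps x : B) = a * D x :=
    fun x => rfl
  refine ⟨restrictDer (verSub 𝒜 H) (a • D) hmaps, ?_, ?_, ?_⟩
  · intro b
    obtain ⟨n, hn, hnb⟩ := hD b
    refine ⟨n, hn, Subtype.ext ?_⟩
    have : ∀ n, (((restrictDer (verSub 𝒜 H) (a • D) hmaps)^[n] b : verSub 𝒜 H) : B)
        = a ^ n * D^[n] b := by
      intro n
      induction n with
      | zero => simp
      | succ n ih =>
        rw [Function.iterate_succ_apply', hE, ih, Derivation.leibniz, Derivation.leibniz_pow, haD,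
          Function.iterate_succ_apply']
        simp only [smul_eq_mul, mul_zero, smul_zero, add_zero]
        ring
    rw [this, hnb]
    simp
  · refine ⟨m + d, fun i x hx => ?_⟩
    rw [hE, show i + (m + d) = m + (i + d) by abel]
    exact SetLike.GradedMul.mul_mem ham (hd _ _ hx)
  · intro h0
    obtain ⟨n, hn, hnH⟩ := hH _ (mem_Gsub 𝒜 hsj hs0)
    have h1 := hE ⟨s ^ n, mem_verSub 𝒜 hnH (homog_pow 𝒜 hsj n)⟩
    rw [h0, Derivation.leibniz_pow] at h1
    have h2 : a * (n • s ^ (n - 1) • D s) ≠ 0 := by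
      rw [nsmul_eq_mul, smul_eq_mul]
      exact mul_ne_zero ha0' (mul_ne_zero (by exact_mod_cast hn.ne')
        (mul_ne_zero (pow_ne_zero _ hs0) ha0))
    exact h2 (by simpa using h1.symm)


/-! ### From `B^{(H)}` to `B` -/

lemma isIntegral_verSub (H : AddSubgroup G) (hH : Tmem 𝒜 H) :
    Algebra.IsIntegral (verSub 𝒜 H) B := by
  refine ⟨fun x => ?_⟩
  induction x using DirectSum.Decomposition.inductionOn 𝒜 with
  | zero => exact isIntegral_zero
  | @homogeneous i m =>
    obtain ⟨x, hx⟩ := m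
    by_cases hx0 : x = 0
    · subst hx0; exact isIntegral_zero
    · obtain ⟨n, hn, hnH⟩ := hH i (mem_Gsub 𝒜 hx hx0)
      refine IsIntegral.of_pow hn ?_
      exact isIntegral_algebraMap
        (x := (⟨x ^ n, mem_verSub 𝒜 hnH (homog_pow 𝒜 hx n)⟩ : verSub 𝒜 H))
  | add m m' h h' => exact h.add h'

/-- The extension of the derivation to `B`. -/
lemma exists_ext_B [CharZero B] [IsNoetherianRing B] [IsIntegrallyClosed B]
    (hunit : ∀ n : ℕ, n ≠ 0 → IsUnit (n : B)) (hsat : Gbar 𝒜 = Gsub 𝒜) (H : AddSubgroup G) (hH : Tmem 𝒜 H)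
    (D : Derivation ℤ (verSub 𝒜 H) (verSub 𝒜 H)) :
    ∃ E : Derivation ℤ B B, ∀ r : verSub 𝒜 H, E r = D r := by
  have hintg := isIntegral_verSub 𝒜 H hH
  let K := FractionRing B
  have hinj : Function.Injective (algebraMap B K) := IsFractionRing.injective B K
  have : CharZero K := charZero_of_injective_algebraMap hinj
  have hRK : ∀ r : verSub 𝒜 H, algebraMap (verSub 𝒜 H) K r = algebraMap B K r := fun r => rfl
  have : FaithfulSMul (verSub 𝒜 H) K := by
    rw [faithfulSMul_iff_algebraMap_injective]
    intro x y hxy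
    exact Subtype.ext (hinj hxy)
  have : Algebra.IsAlgebraic (verSub 𝒜 H) K :=
    (IsFractionRing.isAlgebraic_iff' (verSub 𝒜 H) B K).1 inferInstance
  obtain ⟨F, hF⟩ := exists_ext_der (verSub 𝒜 H) K D
  simp only [hRK] at hF
  -- `F` maps `B` to `B`
  have hmap : ∀ x : B, ∃ y : B, algebraMap B K y = F (algebraMap B K x) := by
    intro x
    induction x using DirectSum.Decomposition.inductionOn 𝒜 with
    | zero => exact ⟨0, by simp⟩
    | add m m' h h' =>
      obtain ⟨y, hy⟩ := h
      obtain ⟨y', hy'⟩ := h'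
      exact ⟨y + y', by simp [hy, hy']⟩
    | @homogeneous i m =>
      obtain ⟨x, hx⟩ := m
      by_cases hx0 : x = 0
      · subst hx0; exact ⟨0, by simp⟩
      refine mem_of_heightOne K _ fun p hp => ?_
      have hpp : p.IsPrime := hp.1
      obtain ⟨m, hm, hmi⟩ := exists_add_mem (MMon 𝒜 p) H (by
        intro m hm
        obtain ⟨x, hx, hxp⟩ := Set.not_subset.1 hm
        exact hH _ (mem_Gsub 𝒜 hx fun h => hxp (h ▸ p.zero_mem)))
        (le_Mbar 𝒜 hsat hp (mem_Gsub 𝒜 hx hx0))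
      obtain ⟨u, hu, hup⟩ := Set.not_subset.1 hm
      have hu0 : u ≠ 0 := fun h => hup (h ▸ p.zero_mem)
      obtain ⟨n, hn, hnm⟩ := hH _ (mem_Gsub 𝒜 hu hu0)
      obtain ⟨n, rfl⟩ : ∃ n', n = n' + 1 := ⟨n - 1, by omega⟩
      let r1 : verSub 𝒜 H := ⟨u * x, mem_verSub 𝒜 hmi (SetLike.GradedMul.mul_mem hu hx)⟩
      let r2 : verSub 𝒜 H := ⟨u ^ (n + 1), mem_verSub 𝒜 hnm (homog_pow 𝒜 hu _)⟩
      have e1 : algebraMap B K u * F (algebraMap B K x) + algebraMap B K x * F (algebraMap B K u)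
          = algebraMap B K (D r1) := by
        rw [← hF r1]; simp [r1]
      have e2 : ((n : K) + 1) * (algebraMap B K u ^ n * F (algebraMap B K u))
          = algebraMap B K (D r2) := by
        rw [← hF r2]; simp [r2, Derivation.leibniz_pow]
      refine ⟨((n + 1 : ℕ) : B) * u ^ (n + 1), fun h => ?_,
        ((n + 1 : ℕ) : B) * u ^ n * D r1 - x * D r2, ?_⟩
      · rcases hpp.mem_or_mem h with h | h
        · exact hpp.ne_top (Ideal.eq_top_of_isUnit_mem _ h (hunit _ (Nat.succ_ne_zero n)))
        · exact hup (hpp.mem_of_pow_mem _ h)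
      · rw [Algebra.smul_def, map_sub, map_mul, map_mul, map_mul, map_mul, map_pow, map_pow,
          map_natCast, ← e1, ← e2]
        push_cast
        ring
  choose f hf using hmap
  refine ⟨Derivation.mk' (AddMonoidHom.toIntLinearMap
    { toFun := f
      map_zero' := hinj (by rw [hf]; simp)
      map_add' := fun x y => hinj (by rw [hf]; simp [hf]) })
      (fun x y => hinj (by simp [hf])), fun r => hinj ?_⟩
  exact (hf r).trans (hF r)

lemma stepA [CharZero B] [IsNoetherianRing B] [IsIntegrallyClosed B]
    (hunit : ∀ n : ℕ, n ≠ 0 → IsUnit (n : B)) (hsat : Gbar 𝒜 = Gsub 𝒜) (H : AddSubgroup G) (hX : H ∈ Xset 𝒜) :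
    ∃ E : Derivation ℤ B B, IsLND E ∧ IsHomogDer 𝒜 E ∧ E ≠ 0 := by
  obtain ⟨hH, D, hD, ⟨d, hd⟩, hD0⟩ := hX
  obtain ⟨E, hE⟩ := exists_ext_B 𝒜 hunit hsat H hH D
  have hEit : ∀ (n : ℕ) (r : verSub 𝒜 H), E^[n] (r : B) = (D^[n] r : verSub 𝒜 H) := by
    intro n
    induction n with
    | zero => intro r; rfl
    | succ n ih => intro r; rw [Function.iterate_succ_apply, hE, ih]; rfl
  have hEd : ∀ (i : G) (x : B), x ∈ 𝒜 i → E x ∈ 𝒜 (i + d) := by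
    intro i x hx
    by_cases hx0 : x = 0
    · subst hx0; rw [map_zero]; exact zero_mem _
    obtain ⟨n, hn, hnm⟩ := hH _ (mem_Gsub 𝒜 hx hx0)
    obtain ⟨n, rfl⟩ : ∃ n', n = n' + 1 := ⟨n - 1, by omega⟩
    have h1 := hd _ ⟨x ^ (n + 1), mem_verSub 𝒜 hnm (homog_pow 𝒜 hx _)⟩ (homog_pow 𝒜 hx _)
    rw [← hE, Derivation.leibniz_pow, Nat.add_sub_cancel] at h1
    have hc : (((n + 1 : ℕ) : B)) ∈ 𝒜 0 := SetLike.natCast_mem_graded 𝒜 _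
    have h2 : ((n + 1 : ℕ) : B) * x ^ n ∈ 𝒜 (n • i) := by
      simpa using SetLike.GradedMul.mul_mem hc (homog_pow 𝒜 hx n)
    refine homog_cancel 𝒜 h2 (mul_ne_zero (Nat.cast_ne_zero.2 (Nat.succ_ne_zero n))
      (pow_ne_zero _ hx0)) ?_
    convert h1 using 1
    · rw [succ_nsmul]; congr 1; abel
    · rw [nsmul_eq_mul, smul_eq_mul, mul_assoc]
  have hdesc : ∀ n : ℕ, n • d ∈ H → 0 < n → ∀ N : ℕ, ∀ i : G, ∀ b ∈ 𝒜 i, n • i ∈ H →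
      HasDeg E (b ^ n) N → ∃ m, E^[m] b = 0 := by
    intro n hnd hn N
    induction N using Nat.strong_induction_on with
    | _ N ih =>
      intro i b hb hni hN
      by_cases hb1 : E b = 0
      · exact ⟨1, hb1⟩
      have hb0 : b ≠ 0 := fun h => hb1 (by simp [h])
      have hni' : n • (i + d) ∈ H := by rw [nsmul_add]; exact add_mem hni hnd
      have hEb := hEd _ _ hb
      have hr := mem_verSub 𝒜 hni' (homog_pow 𝒜 hEb n)
      obtain ⟨l, _, hl⟩ := hD ⟨_, hr⟩
      have hl' : E^[l] (E b ^ n) = 0 := by rw [hEit l ⟨_, hr⟩, hl]; rfl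
      obtain ⟨N', hN'⟩ := HasDeg.exists_of E (pow_ne_zero n hb1) hl'
      have e0 : E (b ^ n) = (n : B) * (b ^ (n - 1) * E b) := by
        rw [Derivation.leibniz_pow, nsmul_eq_mul, smul_eq_mul]
      have hne : E (b ^ n) ≠ 0 := by
        rw [e0]
        exact mul_ne_zero (by exact_mod_cast hn.ne') (mul_ne_zero (pow_ne_zero _ hb0) hb1)
      obtain ⟨N, rfl⟩ : ∃ M, N = M + 1 := by
        rcases N with _ | M
        · exact absurd hN.2 hne
        · exact ⟨M, rfl⟩
      have d1 : HasDeg E (E (b ^ n) ^ n) (n * N) := (hN.der E).pow E n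
      have hcd : HasDeg E ((n : B) ^ n) 0 := by
        refine ⟨pow_ne_zero _ (by exact_mod_cast hn.ne'), ?_⟩
        change E ((n : B) ^ n) = 0
        rw [Derivation.leibniz_pow, Derivation.map_natCast]; simp
      have d2 := hcd.mul E ((hN.pow E (n - 1)).mul E hN')
      have e1 : (n : B) ^ n * ((b ^ n) ^ (n - 1) * E b ^ n) = E (b ^ n) ^ n := by
        rw [e0, mul_pow, mul_pow, ← pow_mul, ← pow_mul, mul_comm n (n - 1)]
      rw [e1] at d2
      have := d1.unique E d2
      obtain ⟨n, rfl⟩ : ∃ n', n = n' + 1 := ⟨n - 1, by omega⟩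
      obtain ⟨m, hm⟩ := ih N' (by
        simp only [Nat.add_sub_cancel] at this
        nlinarith) _ _ hEb hni' hN'
      exact ⟨m + 1, hm⟩
  refine ⟨E, ?_, ⟨d, hEd⟩, ?_⟩
  · suffices h : ∀ b, ∃ m, E^[m] b = 0 by
      intro b
      obtain ⟨m, hm⟩ := h b
      exact ⟨m + 1, Nat.succ_pos _, der_iter_vanish E hm (Nat.le_succ m)⟩
    intro b
    induction b using DirectSum.Decomposition.inductionOn 𝒜 with
    | zero => exact ⟨0, rfl⟩
    | add m m' h h' =>
      obtain ⟨a, ha⟩ := h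
      obtain ⟨a', ha'⟩ := h'
      refine ⟨a + a', ?_⟩
      rw [der_iter_add, der_iter_vanish E ha (by omega), der_iter_vanish E ha' (by omega), add_zero]
    | @homogeneous i m =>
      obtain ⟨x, hx⟩ := m
      change ∃ m, E^[m] x = 0
      by_cases hx1 : E x = 0
      · exact ⟨1, hx1⟩
      have hx0 : x ≠ 0 := fun h => hx1 (by simp [h])
      have hi := mem_Gsub 𝒜 hx hx0
      have hdG : d ∈ Gsub 𝒜 := by
        simpa using sub_mem (mem_Gsub 𝒜 (hEd _ _ hx) hx1) hi
      obtain ⟨n1, hn1, hn1i⟩ := hH _ hi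
      obtain ⟨n2, hn2, hn2d⟩ := hH _ hdG
      have h1 : (n1 * n2) • d ∈ H := by rw [mul_nsmul']; exact nsmul_mem hn2d _
      have h2 : (n1 * n2) • i ∈ H := by rw [mul_nsmul]; exact nsmul_mem hn1i _
      have hr := mem_verSub 𝒜 h2 (homog_pow 𝒜 hx (n1 * n2))
      obtain ⟨l, _, hl⟩ := hD ⟨_, hr⟩
      have hl' : E^[l] (x ^ (n1 * n2)) = 0 := by rw [hEit l ⟨_, hr⟩, hl]; rfl
      obtain ⟨N, hN⟩ := HasDeg.exists_of E (pow_ne_zero _ hx0) hl'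
      exact hdesc _ h1 (Nat.mul_pos hn1 hn2) N i x hx h2 hN
  · rintro rfl
    apply hD0
    ext r
    rw [← hE]
    rfl

end gr


/-- Let k be a field of characteristic 0 and B a normal affine k-domain graded over k
by a finitely generated abelian group G.  If B is saturated in codimension 1 (that is,
𝔾̄(B) = 𝔾(B)), then 𝒳(B) = ∅ or 𝒳(B) = 𝕋(B). -/
theorem Xset_empty_or_Tset
    {k : Type*} [Field k] [CharZero k]
    {G : Type*} [AddCommGroup G] [DecidableEq G] [AddGroup.FG G]
    {B : Type*} [CommRing B] [IsDomain B] [IsIntegrallyClosed B]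
    [Algebra k B] [Algebra.FiniteType k B]
    (𝒜 : G → AddSubgroup B) [GradedRing 𝒜]
    (hoverk : ∀ c : k, algebraMap k B c ∈ 𝒜 0)
    (hsat : Gbar 𝒜 = Gsub 𝒜) :
    Xset 𝒜 = ∅ ∨ Xset 𝒜 = { H : AddSubgroup G | Tmem 𝒜 H } := by
  have hN : IsNoetherianRing B := Algebra.FiniteType.isNoetherianRing k B
  have hc : CharZero B := charZero_of_injective_algebraMap (algebraMap k B).injective
  have hunit : ∀ n : ℕ, n ≠ 0 → IsUnit (n : B) := by
    intro n hn
    have : IsUnit (n : k) := (Nat.cast_ne_zero.2 hn).isUnit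
    simpa using this.map (algebraMap k B)
  rcases Set.eq_empty_or_nonempty (Xset 𝒜) with h | ⟨H, hX⟩
  · exact Or.inl h
  · right
    obtain ⟨E, h1, h2, h3⟩ := stepA 𝒜 hunit hsat H hX
    ext H'
    exact ⟨fun h => h.1, fun h => stepB 𝒜 hsat E h1 h2 h3 H' h⟩
end
end

section
/- Let k be a field of characteristic 0 and B = ⊕_{n∈ℕ} B_n an ℕ-graded normal affine k-domain such that the prime ideal B_+ = ⊕_{n>0} B_n has height at least 2. Let x be a homogeneous prime element of B of degree d > 0. If the ring B_{(x)} is non-rigid, then the ring (B/xB)^{(d)} is non-rigid. -/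
noncomputable section

section Aux

/-- top-term Leibniz formula -/
lemma lnd_top {R : Type*} [CommRing R] (D : Derivation ℤ R R) :
    ∀ (s n m : ℕ) (u v : R), n + m = s → (⇑D)^[n + 1] u = 0 → (⇑D)^[m + 1] v = 0 →
      (⇑D)^[n + m] (u * v) = ((n + m).choose n : R) * ((⇑D)^[n] u * (⇑D)^[m] v) ∧
      (⇑D)^[n + m + 1] (u * v) = 0 := by
  have hit0 : ∀ n : ℕ, (⇑D)^[n] 0 = 0 := fun n => iterate_map_zero D n
  intro s
  induction s with
  | zero =>
    intro n m u v h hu hv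
    obtain rfl : n = 0 := by omega
    obtain rfl : m = 0 := by omega
    simp at hu hv
    simp [hu, hv]
  | succ s ih =>
    intro n m u v h hu hv
    have key : ∀ t, (⇑D)^[t + 1] (u * v) = (⇑D)^[t] (u * D v) + (⇑D)^[t] (D u * v) := by
      intro t
      rw [Function.iterate_succ_apply, Derivation.leibniz, iterate_map_add, smul_eq_mul,
        smul_eq_mul, mul_comm v]
    have kill : ∀ t w, (⇑D)^[t] w = 0 → (⇑D)^[t+1] w = 0 := by
      intro t w hw
      rw [Function.iterate_succ_apply', hw, map_zero]
    rcases n with _ | n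
    · obtain ⟨m, rfl⟩ : ∃ m', m = m' + 1 := ⟨m - 1, by omega⟩
      have hu0 : D u = 0 := by simpa using hu
      obtain ⟨h1, h2⟩ := ih 0 m u (D v) (by omega) hu (by simpa using hv)
      rw [zero_add] at h1 h2
      constructor
      · rw [zero_add, key, h1, hu0, zero_mul, hit0]
        simp
      · rw [zero_add, key, h2, hu0, zero_mul, hit0]
        simp
    · rcases m with _ | m
      · have hv0 : D v = 0 := by simpa using hv
        obtain ⟨h1, h2⟩ := ih n 0 (D u) v (by omega) (by simpa using hu) hv
        rw [add_zero] at h1 h2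
        constructor
        · rw [add_zero, key, h1, hv0, mul_zero, hit0]
          simp
        · rw [add_zero, key, h2, hv0, mul_zero, hit0]
          simp
      · obtain ⟨h1, h2⟩ := ih (n+1) m u (D v) (by omega) hu (by simpa using hv)
        obtain ⟨h3, h4⟩ := ih n (m+1) (D u) v (by omega) (by simpa using hu) hv
        have e1 : n + 1 + (m + 1) = (n + 1 + m) + 1 := by ring
        have e2 : n + (m + 1) = n + 1 + m := by ring
        rw [e2] at h3 h4
        constructor
        · rw [e1, key, h1, h3, show (n + 1 + m + 1).choose (n + 1) = (n + 1 + m).choose n +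
            (n + 1 + m).choose (n + 1) from Nat.choose_succ_succ _ _]
          simp only [Function.iterate_succ_apply]
          push_cast
          ring
        · rw [e1, key, h2, h4, add_zero]

lemma lnd_unit {R : Type*} [CommRing R] [IsDomain R] [CharZero R] (D : Derivation ℤ R R)
    (hD : IsLND D) (u v : R) (huv : u * v = 1) : D u = 0 := by
  classical
  have hfind : ∀ w : R, w ≠ 0 → ∃ n, (⇑D)^[n] w ≠ 0 ∧ (⇑D)^[n+1] w = 0 := by
    intro w hw
    have hex : ∃ n, (⇑D)^[n] w = 0 := let ⟨n, _, h⟩ := hD w; ⟨n, h⟩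
    have hpos : Nat.find hex ≠ 0 := by
      intro h0
      have := Nat.find_spec hex
      rw [h0] at this
      exact hw this
    obtain ⟨n, hn⟩ := Nat.exists_eq_succ_of_ne_zero hpos
    refine ⟨n, Nat.find_min hex (by omega), ?_⟩
    have := Nat.find_spec hex
    rwa [hn] at this
  obtain ⟨n, hn, hn'⟩ := hfind u (left_ne_zero_of_mul_eq_one huv)
  obtain ⟨m, hm, hm'⟩ := hfind v (right_ne_zero_of_mul_eq_one huv)
  obtain ⟨h1, -⟩ := lnd_top D _ n m u v rfl hn' hm'
  by_cases h0 : n + m = 0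
  · obtain rfl : n = 0 := by omega
    simpa using hn'
  · exfalso
    obtain ⟨t, ht⟩ := Nat.exists_eq_succ_of_ne_zero h0
    have hz : (⇑D)^[n+m] (u * v) = 0 := by
      rw [huv, ht, Nat.succ_eq_add_one, Function.iterate_succ_apply, Derivation.map_one_eq_zero,
        iterate_map_zero]
    rw [hz] at h1
    have : ((n+m).choose n : R) ≠ 0 := by
      exact_mod_cast (Nat.choose_pos (Nat.le_add_right n m)).ne'
    exact mul_ne_zero this (mul_ne_zero hn hm) h1.symm

lemma unit_mem_zero {B : Type*} [CommRing B] [IsDomain B] (𝒜 : ℤ → AddSubgroup B) [GradedRing 𝒜]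
    (hNN : ∀ i : ℤ, i < 0 → 𝒜 i = ⊥) (u v : B) (huv : u * v = 1) : u ∈ 𝒜 0 := by
  classical
  have hne : ∀ w : B, w ≠ 0 → (DirectSum.decompose 𝒜 w).support.Nonempty := by
    intro w hw
    rw [Finset.nonempty_iff_ne_empty]
    intro h
    rw [DFinsupp.support_eq_empty] at h
    exact hw ((DirectSum.decompose 𝒜).injective (by rw [h, DirectSum.decompose_zero]))
  have hnn : ∀ w : B, ∀ i ∈ (DirectSum.decompose 𝒜 w).support, 0 ≤ i := by
    intro w i hi
    by_contra hlt
    have h1 : (DirectSum.decompose 𝒜 w i : B) ∈ (⊥ : AddSubgroup B) :=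
      (hNN i (by omega)).le (DirectSum.decompose 𝒜 w i).2
    exact (DFinsupp.mem_support_iff.1 hi) (Subtype.ext (by simpa using h1))
  have hu := hne u (left_ne_zero_of_mul_eq_one huv)
  have hv := hne v (right_ne_zero_of_mul_eq_one huv)
  set n := (DirectSum.decompose 𝒜 u).support.max' hu with hn
  set m := (DirectSum.decompose 𝒜 v).support.max' hv with hm
  have hnm := Finset.max'_mem _ hu
  have hmm := Finset.max'_mem _ hv
  rw [← hn] at hnm
  rw [← hm] at hmm
  have hn0 := hnn u n hnm
  have hm0 := hnn v m hmm
  have hmul := DirectSum.coe_mul_apply (A := 𝒜) (DirectSum.decompose 𝒜 u)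
    (DirectSum.decompose 𝒜 v) (n + m)
  rw [Finset.sum_eq_single_of_mem (n, m) (by simp [Finset.mem_filter, Finset.mem_product, hnm, hmm,
    -DFinsupp.mem_support_toFun])] at hmul
  · rw [← DirectSum.decompose_mul, huv] at hmul
    have hne0 : ((DirectSum.decompose 𝒜 u n : B) * (DirectSum.decompose 𝒜 v m : B)) ≠ 0 := by
      apply mul_ne_zero
      · have := DFinsupp.mem_support_iff.1 hnm
        simpa using this
      · have := DFinsupp.mem_support_iff.1 hmm
        simpa using this
    have hs : n + m = 0 := by
      by_contra hs
      rw [DirectSum.decompose_of_mem_ne 𝒜 (SetLike.GradedOne.one_mem : (1:B) ∈ 𝒜 0)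
        (Ne.symm hs)] at hmul
      exact hne0 hmul.symm
    have hn00 : n = 0 := by omega
    have hsupp : (DirectSum.decompose 𝒜 u).support = {0} := by
      apply Finset.eq_singleton_iff_unique_mem.2
      refine ⟨hn00 ▸ hnm, fun i hi => ?_⟩
      have := hnn u i hi
      have := Finset.le_max' _ i hi
      omega
    rw [← DirectSum.sum_support_decompose 𝒜 u, hsupp, Finset.sum_singleton]
    exact (DirectSum.decompose 𝒜 u 0).2
  · rintro ⟨i, j⟩ hij hne'
    exfalso
    rw [Finset.mem_filter, Finset.mem_product] at hij
    obtain ⟨⟨hi, hj⟩, hs⟩ := hij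
    have := Finset.le_max' _ i hi
    have := Finset.le_max' _ j hj
    simp only at hs hi hj
    apply hne'
    ext <;> simp <;> omega

end Aux

section Filt

set_option linter.unusedSectionVars false

variable {B L : Type*} [CommRing B] [CommRing L]

/-- The filtration of `B_{(x)}`. -/
def Fil (𝒜 : ℤ → AddSubgroup B) (ι : B →+* L) (u : Lˣ) (d m : ℤ) : AddSubgroup L where
  carrier := {y | ∃ b ∈ 𝒜 (m * d), y * ((u ^ m : Lˣ) : L) = ι b}
  zero_mem' := ⟨0, zero_mem _, by simp⟩
  add_mem' := by
    rintro y z ⟨b, hb, hy⟩ ⟨c, hc, hz⟩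
    exact ⟨b + c, add_mem hb hc, by rw [add_mul, hy, hz, map_add]⟩
  neg_mem' := by
    rintro y ⟨b, hb, hy⟩
    exact ⟨-b, neg_mem hb, by rw [neg_mul, hy, map_neg]⟩

/-- The data of the proof. -/
structure FS (𝒜 : ℤ → AddSubgroup B) (ι : B →+* L) (x : B) (u : Lˣ) (d : ℤ) (A : Subring L) :
    Prop where
  hd : 0 < d
  hNN : ∀ i : ℤ, i < 0 → 𝒜 i = ⊥
  inj : Function.Injective ι
  hxd : x ∈ 𝒜 d
  hxu : ι x = u
  memA : ∀ y, y ∈ A ↔ ∃ m : ℤ, y ∈ Fil 𝒜 ι u d m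

namespace FS

variable {𝒜 : ℤ → AddSubgroup B} [GradedRing 𝒜] {ι : B →+* L} {x : B} {u : Lˣ} {d : ℤ}
  {A : Subring L}

lemma fil_mul {m n : ℤ} {y z : L} (hy : y ∈ Fil 𝒜 ι u d m) (hz : z ∈ Fil 𝒜 ι u d n) :
    y * z ∈ Fil 𝒜 ι u d (m + n) := by
  obtain ⟨b, hb, hy⟩ := hy
  obtain ⟨c, hc, hz⟩ := hz
  refine ⟨b * c, ?_, ?_⟩
  · rw [add_mul]; exact SetLike.GradedMul.mul_mem hb hc
  · rw [map_mul, ← hy, ← hz, zpow_add, Units.val_mul]; ring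

lemma one_mem_fil (S : FS 𝒜 ι x u d A) : (1 : L) ∈ Fil 𝒜 ι u d 1 :=
  ⟨x, by rw [one_mul]; exact S.hxd, by rw [S.hxu]; simp⟩

lemma fil_mono_nat (S : FS 𝒜 ι x u d A) (m : ℤ) (n : ℕ) : Fil 𝒜 ι u d m ≤ Fil 𝒜 ι u d (m + n) := by
  induction n with
  | zero => simp
  | succ n ih =>
    intro y hy
    have := fil_mul (ih hy) S.one_mem_fil
    rw [mul_one] at this
    push_cast
    rwa [← add_assoc]

lemma fil_mono (S : FS 𝒜 ι x u d A) {m n : ℤ} (h : m ≤ n) : Fil 𝒜 ι u d m ≤ Fil 𝒜 ι u d n := by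
  obtain ⟨t, rfl⟩ := Int.le.dest h
  exact S.fil_mono_nat m t

lemma fil_neg (S : FS 𝒜 ι x u d A) {m : ℤ} (hm : m < 0) {y : L} (hy : y ∈ Fil 𝒜 ι u d m) : y = 0 := by
  obtain ⟨b, hb, hy⟩ := hy
  rw [S.hNN _ (mul_neg_of_neg_of_pos hm S.hd)] at hb
  rw [AddSubgroup.mem_bot] at hb
  rw [hb, map_zero] at hy
  exact (Units.mul_left_eq_zero _).1 hy

lemma ex_y (S : FS 𝒜 ι x u d A) {m : ℤ} {b : B} (hb : b ∈ 𝒜 (m * d)) :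
    ∃ y : A, (y : L) * ((u ^ m : Lˣ) : L) = ι b := by
  have h : ι b * ((u ^ m)⁻¹ : Lˣ) * ((u ^ m : Lˣ) : L) = ι b := by
    rw [mul_assoc, Units.inv_mul, mul_one]
  exact ⟨⟨ι b * ((u ^ m)⁻¹ : Lˣ), (S.memA _).2 ⟨m, b, hb, h⟩⟩, h⟩

lemma y_unique {m : ℤ} {b : B} {y z : A} (hy : (y : L) * ((u ^ m : Lˣ) : L) = ι b)
    (hz : (z : L) * ((u ^ m : Lˣ) : L) = ι b) : y = z := by
  apply Subtype.ext
  exact (Units.mul_left_inj _).1 (hy.trans hz.symm)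

/-- bounded shift on a given element -/
def Good (𝒜 : ℤ → AddSubgroup B) (ι : B →+* L) (u : Lˣ) (d : ℤ) {A : Subring L}
    (D : Derivation ℤ A A) (N m : ℤ) (b : B) : Prop :=
  ∀ y : A, (y : L) * ((u ^ m : Lˣ) : L) = ι b → (D y : L) ∈ Fil 𝒜 ι u d (m + N)

variable (D : Derivation ℤ A A)

lemma good_mul (S : FS 𝒜 ι x u d A) {N m n : ℤ} {b c : B} (hb : b ∈ 𝒜 (m * d)) (hc : c ∈ 𝒜 (n * d))
    (gb : Good 𝒜 ι u d D N m b) (gc : Good 𝒜 ι u d D N n c) :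
    Good 𝒜 ι u d D N (m + n) (b * c) := by
  intro y hy
  obtain ⟨y1, h1⟩ := S.ex_y hb
  obtain ⟨y2, h2⟩ := S.ex_y hc
  obtain rfl : y = y1 * y2 := by
    apply y_unique hy
    rw [map_mul, ← h1, ← h2, zpow_add, Units.val_mul, Subring.coe_mul]; ring
  rw [Derivation.leibniz]
  simp only [smul_eq_mul, Subring.coe_add, Subring.coe_mul]
  apply add_mem
  · have := fil_mul (𝒜 := 𝒜) (ι := ι) (u := u) (d := d) ⟨b, hb, h1⟩ (gc y2 h2)
    rwa [← add_assoc] at this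
  · have := fil_mul (𝒜 := 𝒜) (ι := ι) (u := u) (d := d) ⟨c, hc, h2⟩ (gb y1 h1)
    rwa [← add_assoc, add_comm n m] at this

lemma good_add (S : FS 𝒜 ι x u d A) {N m : ℤ} {b c : B} (hb : b ∈ 𝒜 (m * d)) (hc : c ∈ 𝒜 (m * d))
    (gb : Good 𝒜 ι u d D N m b) (gc : Good 𝒜 ι u d D N m c) :
    Good 𝒜 ι u d D N m (b + c) := by
  intro y hy
  obtain ⟨y1, h1⟩ := S.ex_y hb
  obtain ⟨y2, h2⟩ := S.ex_y hc
  obtain rfl : y = y1 + y2 := by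
    apply y_unique hy
    rw [map_add, ← h1, ← h2, Subring.coe_add]; ring
  rw [map_add]
  exact add_mem (gb _ h1) (gc _ h2)

lemma good_zero {N m : ℤ} : Good 𝒜 ι u d D N m 0 := by
  intro y hy
  obtain rfl : y = 0 := y_unique hy (by simp)
  rw [map_zero]
  exact zero_mem _

lemma exists_bound (S : FS 𝒜 ι x u d A) {k σ : Type*} [Field k] [Algebra k B] [Finite σ] (h : σ → B) (e : σ → ℤ)
    (hh : ∀ i, h i ∈ 𝒜 (e i))
    (hsurj : Function.Surjective (MvPolynomial.aeval h : MvPolynomial σ k →ₐ[k] B))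
    (hk : ∀ c : k, algebraMap k B c ∈ 𝒜 0)
    (hDk : ∀ (c : k) (y : A), (y : L) = ι (algebraMap k B c) → D y = 0) :
    ∃ N : ℤ, ∀ (m : ℤ) (y : A), (y : L) ∈ Fil 𝒜 ι u d m → (D y : L) ∈ Fil 𝒜 ι u d (m + N) := by
  classical
  cases nonempty_fintype σ
  obtain ⟨d', hd'⟩ := Int.eq_ofNat_of_zero_le S.hd.le
  let mon : (σ → ℕ) → B := fun α => ∏ i, h i ^ α i
  let w : (σ → ℕ) → ℤ := fun α => ∑ i, (α i : ℤ) * e i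
  have hmon : ∀ α, mon α ∈ 𝒜 (w α) := by
    intro α
    apply SetLike.prod_mem_graded
    intro i _
    have := SetLike.pow_mem_graded (α i) (hh i)
    rwa [nsmul_eq_mul] at this
  have mon_add : ∀ α β, mon (α + β) = mon α * mon β := by
    intro α β
    simp only [mon, Pi.add_apply, pow_add, Finset.prod_mul_distrib]
  have w_add : ∀ α β, w (α + β) = w α + w β := by
    intro α β
    simp only [w, Pi.add_apply, Nat.cast_add, add_mul, Finset.sum_add_distrib]
  -- Step 1
  have fin : {α : σ → ℕ | ∀ i, α i ≤ d'}.Finite := by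
    exact Set.Finite.pi' (fun _ => Set.finite_Iic d')
  have step1 : ∃ N : ℤ, ∀ α ∈ {α : σ → ℕ | ∀ i, α i ≤ d'}, ∀ m, w α = m * d →
      Good 𝒜 ι u d D N m (mon α) := by
    have : ∀ᶠ N : ℤ in Filter.atTop, ∀ α ∈ {α : σ → ℕ | ∀ i, α i ≤ d'}, ∀ m, w α = m * d →
      Good 𝒜 ι u d D N m (mon α) := by
      rw [Filter.eventually_all_finite fin]
      intro α _
      by_cases hm : ∃ m, w α = m * d
      · obtain ⟨m, hm⟩ := hm
        obtain ⟨y, hy⟩ := S.ex_y (hm ▸ hmon α)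
        obtain ⟨n, hn⟩ := (S.memA _).1 (D y).2
        filter_upwards [Filter.eventually_ge_atTop (n - m)] with N hN m' hm' z hz
        obtain rfl : m' = m := by
          apply mul_right_cancel₀ S.hd.ne'
          rw [← hm, ← hm']
        obtain rfl : z = y := y_unique hz hy
        exact S.fil_mono (by omega) hn
      · filter_upwards with N m hm'
        exact absurd ⟨m, hm'⟩ hm
    exact this.exists
  obtain ⟨N, hN⟩ := step1
  have step2 : ∀ (s : ℕ) (α : σ → ℕ), ∑ i, α i = s → ∀ m, w α = m * d →
      Good 𝒜 ι u d D N m (mon α) := by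
    intro s
    induction s using Nat.strong_induction_on with
    | _ s ih =>
      intro α hs m hm
      by_cases hsm : ∀ i, α i ≤ d'
      · exact hN α hsm m hm
      · push Not at hsm
        obtain ⟨j, hj⟩ := hsm
        have hαe : α = (α - Pi.single j d') + Pi.single j d' := by
          funext i
          by_cases hij : i = j
          · subst hij; simp; omega
          · simp [hij]
        set β := α - Pi.single j d' with hβ
        have hw : w (Pi.single j d') = e j * d := by
          simp only [w]
          rw [Finset.sum_eq_single j]
          · simp [hd', mul_comm]
          · intro i _ hij; simp [hij]
          · simp
        have hwβ : w β = (m - e j) * d := by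
          have := w_add β (Pi.single j d')
          rw [← hαe, hm, hw] at this
          linarith
        have hsum : ∑ i, α i = ∑ i, β i + d' := by
          conv_lhs => rw [hαe]
          simp [Finset.sum_add_distrib]
        have hdpos := S.hd
        have g1 := ih (∑ i, β i) (by omega) β rfl (m - e j) hwβ
        have g2 := hN (Pi.single j d') (by
          intro i
          by_cases hij : i = j
          · subst hij; simp
          · simp [hij]) (e j) hw
        have := S.good_mul D (hwβ ▸ hmon β) (hw ▸ hmon (Pi.single j d')) g1 g2
        rw [← mon_add, ← hαe] at this
        simpa using this
  have step3 : ∀ (p : MvPolynomial σ k) (m : ℤ),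
      Good 𝒜 ι u d D N m (DirectSum.decompose 𝒜 (MvPolynomial.aeval h p) (m * d) : B) := by
    intro p
    induction p using MvPolynomial.induction_on' with
    | monomial α c =>
      intro m
      have hrw : MvPolynomial.aeval h (MvPolynomial.monomial α c) =
          algebraMap k B c * mon α := by
        rw [MvPolynomial.aeval_monomial, Finsupp.prod_fintype]
        simp
      have hmem : algebraMap k B c * mon α ∈ 𝒜 (w α) := by
        have := SetLike.GradedMul.mul_mem (hk c) (hmon α)
        rwa [zero_add] at this
      rw [hrw]
      by_cases hm : w α = m * d
      · rw [DirectSum.decompose_of_mem_same 𝒜 (hm ▸ hmem)]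
        have := S.good_mul D (N := N) (m := 0) (n := m) (b := algebraMap k B c) (c := mon α)
          (by rw [zero_mul]; exact hk c) (hm ▸ hmon α) (by
            intro y hy
            rw [hDk c y (by simpa using hy)]
            exact zero_mem _) (step2 _ α rfl m hm)
        rwa [zero_add] at this
      · rw [DirectSum.decompose_of_mem_ne 𝒜 hmem hm]
        exact good_zero D
    | add p q hp hq =>
      intro m
      rw [map_add, DirectSum.decompose_add, DirectSum.add_apply, AddSubgroup.coe_add]
      exact S.good_add D (SetLike.coe_mem _) (SetLike.coe_mem _) (hp m) (hq m)
  refine ⟨N, fun m y hy => ?_⟩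
  obtain ⟨b, hb, hyb⟩ := hy
  obtain ⟨p, rfl⟩ := hsurj b
  have := step3 p m
  rw [DirectSum.decompose_of_mem_same 𝒜 hb] at this
  exact this y hyb

end FS

end Filt

section Constr

variable {B L : Type*} [CommRing B] [CommRing L]

namespace FS

variable {𝒜 : ℤ → AddSubgroup B} [GradedRing 𝒜] {ι : B →+* L} {x : B} {u : Lˣ} {d : ℤ}
  {A : Subring L} (D : Derivation ℤ A A)

lemma exists_delta (S : FS 𝒜 ι x u d A) (e : ℤ)
    (he : ∀ (m : ℤ) (y : A), (y : L) ∈ Fil 𝒜 ι u d m → (D y : L) ∈ Fil 𝒜 ι u d (m + e)) :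
    ∃ δ : B →+ B, (∀ (m : ℤ) (b : B) (y : A), b ∈ 𝒜 (m * d) →
        (y : L) * ((u ^ m : Lˣ) : L) = ι b →
        δ b ∈ 𝒜 ((m + e) * d) ∧ (D y : L) * ((u ^ (m + e) : Lˣ) : L) = ι (δ b)) ∧
      (∀ (i : ℤ) (b : B), ¬ d ∣ i → b ∈ 𝒜 i → δ b = 0) := by
  classical
  have hex : ∀ i (b : 𝒜 i), ∃ c : B, (∀ (m : ℤ), i = m * d → ∀ y : A,
      (y : L) * ((u ^ m : Lˣ) : L) = ι b →
      c ∈ 𝒜 ((m + e) * d) ∧ (D y : L) * ((u ^ (m + e) : Lˣ) : L) = ι c) ∧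
      (¬ d ∣ i → c = 0) := by
    intro i b
    by_cases hdi : d ∣ i
    · obtain ⟨m, rfl⟩ := hdi
      have hb : (b : B) ∈ 𝒜 (m * d) := by rw [mul_comm]; exact b.2
      obtain ⟨y, hy⟩ := S.ex_y hb
      obtain ⟨c, hc, hyc⟩ := he m y ⟨b, hb, hy⟩
      refine ⟨c, fun m' hm' z hz => ?_, fun h => absurd (dvd_mul_right d m) h⟩
      obtain rfl : m = m' := by
        apply mul_left_cancel₀ S.hd.ne'
        rw [hm', mul_comm]
      obtain rfl : z = y := y_unique hz hy
      exact ⟨hc, hyc⟩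
    · refine ⟨0, fun m hm => absurd ⟨m, by rw [hm, mul_comm]⟩ hdi, fun _ => rfl⟩
  choose f hf1 hf2 using hex
  let φ : ∀ i, 𝒜 i →+ B := fun i => AddMonoidHom.mk' (f i) (by
    intro a b
    by_cases hdi : d ∣ i
    · obtain ⟨m, hm⟩ := hdi
      rw [mul_comm] at hm
      obtain ⟨y1, h1⟩ := S.ex_y (m := m) (b := (a : B)) (by rw [← hm]; exact a.2)
      obtain ⟨y2, h2⟩ := S.ex_y (m := m) (b := (b : B)) (by rw [← hm]; exact b.2)
      apply S.inj
      rw [← (hf1 i (a + b) m hm (y1 + y2) (by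
        rw [AddSubgroup.coe_add, map_add, ← h1, ← h2, Subring.coe_add, add_mul])).2, map_add, map_add,
        ← (hf1 i a m hm y1 h1).2, ← (hf1 i b m hm y2 h2).2, Subring.coe_add, add_mul]
    · rw [hf2 _ _ hdi, hf2 _ _ hdi, hf2 _ _ hdi, add_zero])
  let δ : B →+ B := (DirectSum.toAddMonoid φ).comp (DirectSum.decomposeAddEquiv 𝒜).toAddMonoidHom
  have hδ : ∀ i (b : B) (hb : b ∈ 𝒜 i), δ b = f i ⟨b, hb⟩ := by
    intro i b hb
    change DirectSum.toAddMonoid φ (DirectSum.decompose 𝒜 b) = _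
    rw [DirectSum.decompose_of_mem 𝒜 hb, DirectSum.toAddMonoid_of]
    rfl
  refine ⟨δ, fun m b y hb hy => ?_, fun i b hdi hb => ?_⟩
  · rw [hδ _ b hb]
    exact hf1 _ ⟨b, hb⟩ m rfl y hy
  · rw [hδ _ b hb]
    exact hf2 _ _ hdi

lemma main (S : FS 𝒜 ι x u d A) (hD : IsLND D) (hD0 : D ≠ 0)
    (hbd : ∃ N : ℤ, ∀ (m : ℤ) (y : A), (y : L) ∈ Fil 𝒜 ι u d m → (D y : L) ∈ Fil 𝒜 ι u d (m + N)) :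
    ∃ D : Derivation ℤ
        (Subring.closure (⋃ i ∈ {i : ℤ | d ∣ i},
          (Ideal.Quotient.mk (Ideal.span {x})) '' (𝒜 i : Set B)))
        (Subring.closure (⋃ i ∈ {i : ℤ | d ∣ i},
          (Ideal.Quotient.mk (Ideal.span {x})) '' (𝒜 i : Set B))),
      IsLND D ∧ D ≠ 0 := by
  classical
  -- minimal degree
  obtain ⟨y0, hy0⟩ : ∃ y, D y ≠ 0 := by
    by_contra hcon
    push Not at hcon
    exact hD0 (Derivation.ext hcon)
  obtain ⟨m0, hm0⟩ := (S.memA _).1 y0.2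
  obtain ⟨e, he, hmin⟩ := Int.exists_least_of_bdd
    (P := fun N => ∀ (m : ℤ) (y : A), (y : L) ∈ Fil 𝒜 ι u d m → (D y : L) ∈ Fil 𝒜 ι u d (m + N))
    ⟨-m0, fun N hN => by
      by_contra hlt
      exact hy0 (Subtype.ext (S.fil_neg (by omega) (hN m0 y0 hm0)))⟩ hbd
  obtain ⟨δ, hδ1, hδ2⟩ := S.exists_delta D e he
  -- some b with δ b not divisible by x
  have hnz : ∃ m, ∃ b ∈ 𝒜 (m * d), ¬ x ∣ δ b := by
    by_contra hcon
    push Not at hcon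
    have := hmin (e - 1) (by
      rintro m y ⟨b, hb, hy⟩
      obtain ⟨h1, h2⟩ := hδ1 m b y hb hy
      obtain ⟨c, hc⟩ := hcon m b hb
      refine ⟨(DirectSum.decompose 𝒜 c ((m + (e - 1)) * d) : B), SetLike.coe_mem _, ?_⟩
      have h3 : x * (DirectSum.decompose 𝒜 c ((m + (e - 1)) * d) : B) = δ b := by
        rw [← DirectSum.decompose_of_mem_same 𝒜 h1, hc,
          show (m + e) * d = d + (m + (e - 1)) * d by ring,
          DirectSum.decompose_mul, DirectSum.decompose_of_mem 𝒜 S.hxd,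
          DirectSum.coe_of_mul_apply_add]
      rw [← h3, map_mul, S.hxu, show m + e = (m + (e - 1)) + 1 by ring, zpow_add_one,
        Units.val_mul] at h2
      have h4 : (u : L) * ((D y : L) * ((u ^ (m + (e - 1)) : Lˣ) : L)) =
          u * ι (DirectSum.decompose 𝒜 c ((m + (e - 1)) * d) : B) := by
        rw [← h2]; ring
      exact (Units.mul_right_inj u).1 h4)
    omega
  -- commutes with x
  have hx : ∀ w, δ (x * w) = x * δ w := by
    intro w
    induction w using DirectSum.Decomposition.inductionOn 𝒜 with
    | zero => simp
    | @homogeneous i b =>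
      have hxb : x * (b : B) ∈ 𝒜 (d + i) := SetLike.GradedMul.mul_mem S.hxd b.2
      by_cases hdi : d ∣ i
      · obtain ⟨m, rfl⟩ := hdi
        have hb : (b : B) ∈ 𝒜 (m * d) := by rw [mul_comm]; exact b.2
        obtain ⟨y, hy⟩ := S.ex_y hb
        obtain ⟨-, h1⟩ := hδ1 m b y hb hy
        obtain ⟨-, h2⟩ := hδ1 (m + 1) (x * b) y (by
          rw [show (m + 1) * d = d + d * m by ring]; exact hxb) (by
          rw [map_mul, ← hy, S.hxu, zpow_add_one, Units.val_mul]; ring)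
        apply S.inj
        rw [← h2, map_mul, ← h1, S.hxu, show m + 1 + e = (m + e) + 1 by ring, zpow_add_one,
          Units.val_mul]
        ring
      · rw [hδ2 _ _ hdi b.2, hδ2 _ _ (by simpa using hdi) hxb, mul_zero]
    | add a b ha hb => rw [mul_add, map_add, map_add, mul_add, ha, hb]
  -- locally nilpotent
  have hit : ∀ (n : ℕ) (m : ℤ) (b : B) (y : A), b ∈ 𝒜 (m * d) →
        (y : L) * ((u ^ m : Lˣ) : L) = ι b →
        (((⇑D)^[n] y : A) : L) * ((u ^ (m + n * e) : Lˣ) : L) = ι ((⇑δ)^[n] b) := by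
    intro n
    induction n with
    | zero => intro m b y hb hy; simpa using hy
    | succ n ih =>
      intro m b y hb hy
      obtain ⟨h1, h2⟩ := hδ1 m b y hb hy
      have := ih (m + e) (δ b) (D y) h1 h2
      rw [Function.iterate_succ_apply, Function.iterate_succ_apply, ← this]
      push_cast
      rw [show m + (n + 1) * e = m + e + n * e by ring]
  have hnil : ∀ w, ∃ n : ℕ, (⇑δ)^[n] w = 0 := by
    intro w
    induction w using DirectSum.Decomposition.inductionOn 𝒜 with
    | zero => exact ⟨0, rfl⟩
    | @homogeneous i b =>
      by_cases hdi : d ∣ i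
      · obtain ⟨m, rfl⟩ := hdi
        have hb : (b : B) ∈ 𝒜 (m * d) := by rw [mul_comm]; exact b.2
        obtain ⟨y, hy⟩ := S.ex_y hb
        obtain ⟨n, -, hn⟩ := hD y
        refine ⟨n, S.inj ?_⟩
        rw [← hit n m b y hb hy, hn, map_zero]
        simp
      · exact ⟨1, hδ2 _ _ hdi b.2⟩
    | add a b ha hb =>
      obtain ⟨n, hn⟩ := ha
      obtain ⟨m, hm⟩ := hb
      refine ⟨n + m, ?_⟩
      rw [iterate_map_add, Function.iterate_add_apply _ n m b, hm, add_comm n m,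
        Function.iterate_add_apply, hn, iterate_map_zero, iterate_map_zero, add_zero]
  -- the Veronese subring
  let M : Submonoid B :=
    { carrier := {b | ∃ m : ℤ, b ∈ 𝒜 (m * d)}
      one_mem' := ⟨0, by rw [zero_mul]; exact SetLike.GradedOne.one_mem⟩
      mul_mem' := by
        rintro a b ⟨m, hm⟩ ⟨n, hn⟩
        exact ⟨m + n, by rw [add_mul]; exact SetLike.GradedMul.mul_mem hm hn⟩ }
  let V : Subring B := Subring.closure (⋃ i ∈ {i : ℤ | d ∣ i}, (𝒜 i : Set B))
  have hMV : ∀ b ∈ M, b ∈ V := by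
    rintro b ⟨m, hm⟩
    apply Subring.subset_closure
    simp only [Set.mem_iUnion]
    exact ⟨m * d, dvd_mul_left d m, hm⟩
  have hVM : ∀ b ∈ V, b ∈ AddSubgroup.closure (M : Set B) := by
    intro b hb
    rw [Subring.mem_closure_iff] at hb
    refine AddSubgroup.closure_mono ?_ hb
    have : Submonoid.closure (⋃ i ∈ {i : ℤ | d ∣ i}, (𝒜 i : Set B)) ≤ M := by
      rw [Submonoid.closure_le]
      intro b hb
      simp only [Set.mem_iUnion] at hb
      obtain ⟨i, ⟨m, rfl⟩, hb⟩ := hb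
      exact ⟨m, by rw [mul_comm]; exact hb⟩
    exact this
  have hVδ : ∀ b ∈ V, δ b ∈ V := by
    intro b hb
    have := hVM b hb
    clear hb
    induction this using AddSubgroup.closure_induction with
    | mem b hb =>
      obtain ⟨m, hm⟩ := hb
      obtain ⟨y, hy⟩ := S.ex_y hm
      exact hMV _ ⟨m + e, (hδ1 m b y hm hy).1⟩
    | zero => rw [map_zero]; exact zero_mem _
    | add a b _ _ ha hb => rw [map_add]; exact add_mem ha hb
    | neg a _ ha => rw [map_neg]; exact neg_mem ha
  have hleib : ∀ a ∈ V, ∀ b ∈ V, δ (a * b) = a * δ b + b * δ a := by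
    intro a ha b hb
    replace ha := hVM a ha
    replace hb := hVM b hb
    induction ha using AddSubgroup.closure_induction with
    | mem a ha =>
      induction hb using AddSubgroup.closure_induction with
      | mem b hb =>
        obtain ⟨m, hm⟩ := ha
        obtain ⟨n, hn⟩ := hb
        obtain ⟨y, hy⟩ := S.ex_y hm
        obtain ⟨z, hz⟩ := S.ex_y hn
        obtain ⟨-, h1⟩ := hδ1 m a y hm hy
        obtain ⟨-, h2⟩ := hδ1 n b z hn hz
        obtain ⟨-, h3⟩ := hδ1 (m + n) (a * b) (y * z)
          (by rw [add_mul]; exact SetLike.GradedMul.mul_mem hm hn)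
          (by rw [map_mul, ← hy, ← hz, zpow_add, Units.val_mul, Subring.coe_mul]; ring)
        apply S.inj
        rw [← h3, map_add, map_mul ι, map_mul ι, ← h1, ← h2, ← hy, ← hz, Derivation.leibniz]
        simp only [smul_eq_mul, Subring.coe_add, Subring.coe_mul, zpow_add, Units.val_mul]
        ring
      | zero => simp
      | add b c _ _ hb hc => rw [mul_add, map_add, map_add, hb, hc]; ring
      | neg b _ hb => rw [mul_neg, map_neg, map_neg, hb]; ring
    | zero => simp
    | add a c _ _ ha hc => rw [add_mul, map_add, map_add, ha, hc]; ring
    | neg a _ ha => rw [neg_mul, map_neg, map_neg, ha]; ring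
  let δV : Derivation ℤ V V := Derivation.mk'
    (AddMonoidHom.toIntLinearMap
      (AddMonoidHom.mk' (fun v : V => (⟨δ v, hVδ v v.2⟩ : V)) (by
        intro a b
        apply Subtype.ext
        simp)))
    (by
      intro a b
      apply Subtype.ext
      simpa using hleib a a.2 b b.2)
  have hδV : ∀ v : V, (δV v : B) = δ v := fun v => rfl
  set C := Subring.closure (⋃ i ∈ {i : ℤ | d ∣ i},
          (Ideal.Quotient.mk (Ideal.span {x})) '' (𝒜 i : Set B)) with hC
  have hmap : V.map (Ideal.Quotient.mk (Ideal.span {x})) = C := by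
    rw [RingHom.map_closure, Set.image_iUnion₂]
  let p : V →+* C := ((Ideal.Quotient.mk (Ideal.span {x})).comp V.subtype).codRestrict C (by
    intro v
    rw [← hmap]
    exact ⟨v, v.2, rfl⟩)
  have hp : ∀ v : V, (p v : B ⧸ Ideal.span {x}) = Ideal.Quotient.mk (Ideal.span {x}) v :=
    fun v => rfl
  have hp0 : ∀ v : V, p v = 0 ↔ x ∣ (v : B) := by
    intro v
    rw [← Ideal.mem_span_singleton, ← Ideal.Quotient.eq_zero_iff_mem, ← hp, Subtype.ext_iff]
    rfl
  have hps : Function.Surjective p.toIntAlgHom := by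
    rintro ⟨c, hc⟩
    rw [← hmap] at hc
    obtain ⟨v, hv, rfl⟩ := hc
    exact ⟨⟨v, hv⟩, rfl⟩
  have hker : ∀ v, p.toIntAlgHom v = 0 → p.toIntAlgHom (δV v) = 0 := by
    intro v hv
    obtain ⟨w, hw⟩ := (hp0 v).1 hv
    exact (hp0 _).2 ⟨δ w, by rw [hδV, hw, hx]⟩
  have hE : ∀ v : V, Derivation.liftOfSurjective hps hker (p v) = p (δV v) :=
    fun v => Derivation.liftOfSurjective_apply hps hker v
  refine ⟨Derivation.liftOfSurjective hps hker, ?_, ?_⟩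
  · intro c
    obtain ⟨v, rfl⟩ := hps c
    obtain ⟨n, hn⟩ := hnil v
    refine ⟨n + 1, Nat.succ_pos _, ?_⟩
    have h1 : ∀ (t : ℕ) (v : V),
        (⇑(Derivation.liftOfSurjective hps hker))^[t] (p v) = p ((⇑δV)^[t] v) := by
      intro t
      induction t with
      | zero => intro v; rfl
      | succ t ih => intro v; rw [Function.iterate_succ_apply, hE, ih, Function.iterate_succ_apply]
    have h2 : ∀ (t : ℕ) (v : V), (((⇑δV)^[t] v : V) : B) = (⇑δ)^[t] v := by
      intro t
      induction t with
      | zero => intro v; rfl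
      | succ t ih =>
        intro v; rw [Function.iterate_succ_apply, ih, Function.iterate_succ_apply, hδV]
    refine (h1 (n + 1) v).trans ((hp0 _).2 ?_)
    rw [h2, Function.iterate_succ_apply', hn, map_zero]
    exact dvd_zero x
  · intro h0
    obtain ⟨m, b, hb, hnd⟩ := hnz
    apply hnd
    have := hE ⟨b, hMV b ⟨m, hb⟩⟩
    rw [h0] at this
    exact (hp0 _).1 this.symm

end FS

end Constr

/-- Let k be a field of characteristic 0 and B = ⊕_{n ∈ ℕ} B_n an ℕ-graded normal
affine k-domain (formalized as a ℤ-graded ring with vanishing negative pieces) such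
that the prime ideal B₊ = ⊕_{n > 0} B_n has height at least 2.  Let x be a homogeneous
prime element of B of degree d > 0.  If B_{(x)} (the degree-0 subring of the ℤ-graded
localization B[1/x], i.e. the set of fractions b/xᵐ with b homogeneous of degree m·d)
is non-rigid, then so is the d-th Veronese subring (B/xB)^{(d)} of B/xB. -/
theorem nonrigid_of_nonrigid_degree_zero_localization
    {k : Type*} [Field k] [CharZero k]
    {B : Type*} [CommRing B] [IsDomain B] [IsIntegrallyClosed B]
    [Algebra k B] [Algebra.FiniteType k B]
    (𝒜 : ℤ → AddSubgroup B) [GradedRing 𝒜]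
    (hNN : ∀ i : ℤ, i < 0 → 𝒜 i = ⊥)
    -- the ideal B₊ is prime of height at least 2 :
    (hBplusPrime : (Ideal.span (⋃ i ∈ {i : ℤ | 0 < i}, (𝒜 i : Set B))).IsPrime)
    (hht2 : ∃ q r : Ideal B, q.IsPrime ∧ r.IsPrime ∧ q < r ∧
      r < Ideal.span (⋃ i ∈ {i : ℤ | 0 < i}, (𝒜 i : Set B)))
    (x : B) (hx : Prime x) (d : ℤ) (hd : 0 < d) (hxd : x ∈ 𝒜 d)
    -- B_{(x)} is non-rigid :
    (hnr : ∃ D : Derivation ℤ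
        (Subring.closure { y : Localization.Away x |
          ∃ (m : ℕ) (b : B), b ∈ 𝒜 ((m : ℤ) * d) ∧
            y * (algebraMap B (Localization.Away x) x) ^ m
              = algebraMap B (Localization.Away x) b })
        (Subring.closure { y : Localization.Away x |
          ∃ (m : ℕ) (b : B), b ∈ 𝒜 ((m : ℤ) * d) ∧
            y * (algebraMap B (Localization.Away x) x) ^ m
              = algebraMap B (Localization.Away x) b }),
      IsLND D ∧ D ≠ 0) :
    -- then (B/xB)^{(d)} is non-rigid :
    ∃ D : Derivation ℤ
        (Subring.closure (⋃ i ∈ {i : ℤ | d ∣ i},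
          (Ideal.Quotient.mk (Ideal.span {x})) '' (𝒜 i : Set B)))
        (Subring.closure (⋃ i ∈ {i : ℤ | d ∣ i},
          (Ideal.Quotient.mk (Ideal.span {x})) '' (𝒜 i : Set B))),
      IsLND D ∧ D ≠ 0 := by
  classical
  set A := Subring.closure { y : Localization.Away x |
          ∃ (m : ℕ) (b : B), b ∈ 𝒜 ((m : ℤ) * d) ∧
            y * (algebraMap B (Localization.Away x) x) ^ m
              = algebraMap B (Localization.Away x) b } with hA
  obtain ⟨D, hD, hD0⟩ := hnr
  let ι := algebraMap B (Localization.Away x)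
  obtain ⟨u, hu⟩ := IsLocalization.Away.algebraMap_isUnit (S := Localization.Away x) x
  have hle : Submonoid.powers x ≤ nonZeroDivisors B :=
    powers_le_nonZeroDivisors_of_noZeroDivisors hx.ne_zero
  have hinj : Function.Injective ι := IsLocalization.injective (Localization.Away x) hle
  have : IsDomain (Localization.Away x) := IsLocalization.isDomain_localization hle
  have hone : (1 : Localization.Away x) ∈ Fil 𝒜 ι u d 1 :=
    ⟨x, by rw [one_mul]; exact hxd, by simp [ι, hu]⟩
  have hmono : ∀ (m : ℤ) (n : ℕ), Fil 𝒜 ι u d m ≤ Fil 𝒜 ι u d (m + n) := by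
    intro m n
    induction n with
    | zero => simp
    | succ n ih =>
      intro y hy
      have := FS.fil_mul (ih hy) hone
      rw [mul_one] at this
      push_cast
      rwa [← add_assoc]
  have hgen : ∀ (m : ℕ) (y : Localization.Away x), y ∈ Fil 𝒜 ι u d (m : ℤ) → y ∈ A := by
    rintro m y ⟨b, hb, hy⟩
    apply Subring.subset_closure
    refine ⟨m, b, hb, ?_⟩
    rw [← hu]
    simpa using hy
  have S : FS 𝒜 ι x u d A :=
    { hd := hd
      hNN := hNN
      inj := hinj
      hxd := hxd
      hxu := hu.symm
      memA := by
        intro y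
        constructor
        · intro hy
          suffices h : ∃ m : ℕ, y ∈ Fil 𝒜 ι u d (m : ℤ) from let ⟨m, hm⟩ := h; ⟨m, hm⟩
          have hzero : (1 : Localization.Away x) ∈ Fil 𝒜 ι u d ((0 : ℕ) : ℤ) :=
            ⟨1, by simpa using SetLike.GradedOne.one_mem (A := 𝒜), by simp⟩
          induction hy using Subring.closure_induction with
          | mem y hy =>
            obtain ⟨m, b, hb, hy⟩ := hy
            refine ⟨m, b, hb, ?_⟩
            rw [← hu] at hy
            simpa using hy
          | zero => exact ⟨0, zero_mem _⟩
          | one => exact ⟨0, hzero⟩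
          | add y z _ _ hy hz =>
            obtain ⟨m, hm⟩ := hy
            obtain ⟨n, hn⟩ := hz
            refine ⟨m + n, ?_⟩
            push_cast
            refine add_mem (hmono m n hm) ?_
            rw [add_comm]
            exact hmono n m hn
          | neg y _ hy =>
            obtain ⟨m, hm⟩ := hy
            exact ⟨m, neg_mem hm⟩
          | mul y z _ _ hy hz =>
            obtain ⟨m, hm⟩ := hy
            obtain ⟨n, hn⟩ := hz
            refine ⟨m + n, ?_⟩
            push_cast
            exact FS.fil_mul hm hn
        · rintro ⟨m, hm⟩
          obtain ⟨t, ht⟩ : ∃ t : ℕ, m + m.natAbs = t := ⟨(m + m.natAbs).toNat, by omega⟩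
          have := hmono m m.natAbs hm
          rw [ht] at this
          exact hgen t y this }
  -- constants
  have hk : ∀ c : k, algebraMap k B c ∈ 𝒜 0 := by
    intro c
    by_cases hc : c = 0
    · rw [hc, map_zero]; exact zero_mem _
    · exact unit_mem_zero 𝒜 hNN _ (algebraMap k B c⁻¹) (by
        rw [← map_mul, mul_inv_cancel₀ hc, map_one])
  have hcz : CharZero A := by
    have hinj2 : Function.Injective (ι.comp (algebraMap k B)) :=
      hinj.comp (algebraMap k B).injective
    have : CharZero (Localization.Away x) := charZero_of_injective_ringHom hinj2
    exact ⟨fun a b hab => by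
      have := congrArg (fun t : A => (t : Localization.Away x)) hab
      simpa using this⟩
  have hmemk : ∀ c : k, ι (algebraMap k B c) ∈ A := fun c =>
    hgen 0 _ ⟨algebraMap k B c, by simpa using hk c, by simp⟩
  have hDk : ∀ (c : k) (y : A), (y : Localization.Away x) = ι (algebraMap k B c) → D y = 0 := by
    intro c y hy
    by_cases hc : c = 0
    · obtain rfl : y = 0 := Subtype.ext (by rw [hy, hc]; simp)
      exact map_zero D
    · refine lnd_unit D hD y ⟨_, hmemk c⁻¹⟩ (Subtype.ext ?_)
      rw [Subring.coe_mul, hy]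
      simp only
      rw [← map_mul, ← map_mul, mul_inv_cancel₀ hc, map_one, map_one]
      rfl
  -- homogeneous generators
  obtain ⟨s, hs⟩ := (inferInstance : Algebra.FiniteType k B).out
  let σ := Σ b : s, ((DirectSum.decompose 𝒜 (b : B)).support : Finset ℤ)
  let h : σ → B := fun t => (DirectSum.decompose 𝒜 (t.1 : B) (t.2 : ℤ) : B)
  have hsurj : Function.Surjective (MvPolynomial.aeval h : MvPolynomial σ k →ₐ[k] B) := by
    rw [← AlgHom.range_eq_top, eq_top_iff, ← hs]
    apply Algebra.adjoin_le
    intro b hb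
    rw [← DirectSum.sum_support_decompose 𝒜 b]
    apply sum_mem
    intro i hi
    exact ⟨MvPolynomial.X ⟨⟨b, hb⟩, ⟨i, hi⟩⟩, by simp [h]⟩
  have hbd := S.exists_bound D h (fun t => (t.2 : ℤ)) (fun t => SetLike.coe_mem _) hsurj hk hDk
  exact S.main D hD hD0 hbd
end
end
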